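/- arXiv:2601.16585 — 2 statements merged into one kernel-verified Lean document; each statement's English description precedes it below -/
import Mathlib

section
/- (Supplementary Lemma 1.) Suppose (B1)–(B4) hold and C_n/p_n → ∞. Then the generic elliptical credible region S = {β : (β − β̂_n)^⊤ Σ^{-1} (β − β̂_n) ≤ C_n} contains the true parameter β⁰_n with probability approaching 1, i.e. P{(β̂_n − β⁰_n)^⊤ Σ^{-1} (β̂_n − β⁰_n) ≤ C_n} → 1 as n → ∞. -/
open MeasureTheory ProbabilityTheory Matrix Filter Asymptotics

noncomputable section

/-- Euclidean norm of a finite real vector. -/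
def enorm2 {ι : Type*} [Fintype ι] (v : ι → ℝ) : ℝ := Real.sqrt (∑ i, v i ^ 2)

/-- `A_n = O_p(B_n)`: for every `γ > 0` there are `ζ_γ > 0` and `N_γ` with
`P(|A_n| > ζ_γ B_n) < γ` for all `n ≥ N_γ`. -/
def IsBigOP {Ω : ℕ → Type*} [∀ n, MeasurableSpace (Ω n)]
    (P : (n : ℕ) → Measure (Ω n)) (A : (n : ℕ) → Ω n → ℝ) (B : ℕ → ℝ) : Prop :=
  ∀ γ : ℝ, 0 < γ → ∃ ζ : ℝ, 0 < ζ ∧ ∃ N : ℕ, ∀ n, N ≤ n →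
    ((P n) {ω | ζ * B n < |A n ω|}).toReal < γ

/-- `A_n = Ω_p(B_n)`: there exist `ζ, γ > 0` and `N` with
`P(|A_n| ≥ ζ B_n) ≥ γ` for all `n ≥ N`. -/
def IsOmegaP {Ω : ℕ → Type*} [∀ n, MeasurableSpace (Ω n)]
    (P : (n : ℕ) → Measure (Ω n)) (A : (n : ℕ) → Ω n → ℝ) (B : ℕ → ℝ) : Prop :=
  ∃ ζ γ : ℝ, 0 < ζ ∧ 0 < γ ∧ ∃ N : ℕ, ∀ n, N ≤ n →
    γ ≤ ((P n) {ω | ζ * B n ≤ |A n ω|}).toReal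

/-- `A_n ≍ B_n`: both `O_p` and `Ω_p`. -/
def IsThetaP {Ω : ℕ → Type*} [∀ n, MeasurableSpace (Ω n)]
    (P : (n : ℕ) → Measure (Ω n)) (A : (n : ℕ) → Ω n → ℝ) (B : ℕ → ℝ) : Prop :=
  IsBigOP P A B ∧ IsOmegaP P A B

/-- `A_n = o_p(B_n)`: `P(|A_n| ≥ γ B_n) → 0` for every `γ > 0`. -/
def IsLittleOP {Ω : ℕ → Type*} [∀ n, MeasurableSpace (Ω n)]
    (P : (n : ℕ) → Measure (Ω n)) (A : (n : ℕ) → Ω n → ℝ) (B : ℕ → ℝ) : Prop :=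
  ∀ γ : ℝ, 0 < γ →
    Tendsto (fun n => ((P n) {ω | γ * B n ≤ |A n ω|}).toReal) atTop (nhds 0)

/-- Convergence in probability to a constant `c`. -/
def TendstoInP {Ω : ℕ → Type*} [∀ n, MeasurableSpace (Ω n)]
    (P : (n : ℕ) → Measure (Ω n)) (A : (n : ℕ) → Ω n → ℝ) (c : ℝ) : Prop :=
  ∀ γ : ℝ, 0 < γ →
    Tendsto (fun n => ((P n) {ω | γ ≤ |A n ω - c|}).toReal) atTop (nhds 0)

/-- `Z` has (under `P`) the multivariate Gaussian distribution with mean vector `m` and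
covariance matrix `V`, characterized through one-dimensional projections. -/
def IsMvGaussian {Ω : Type*} [MeasurableSpace Ω] (P : Measure Ω)
    {ι : Type*} [Fintype ι] (Z : Ω → ι → ℝ) (m : ι → ℝ) (V : Matrix ι ι ℝ) : Prop :=
  ∀ a : ι → ℝ,
    Measure.map (fun ω => ∑ i, a i * Z ω i) P
      = gaussianReal (∑ i, a i * m i) (Real.toNNReal (a ⬝ᵥ (V *ᵥ a)))

end

/-! The error `d = β̂ - β⁰` solves `(XᵀX + Δ) d = Xᵀε - Δβ⁰`.  Since `XᵀX + Δ ≥ n dmin`, the form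
`dᵀ Σ⁻¹ d = s⁻¹ dᵀ (XᵀX + Δ) d` is at most `2 (‖Xᵀε‖² + ‖Δβ⁰‖²) / (s n dmin)`.  Both squared norms
are `O_p(n p_n)`: the first by Markov's inequality, because `E‖Xᵀε‖² = σ² tr(XᵀX)`; the second
because `max δ_g = O_p(√n)` and `‖β⁰‖² = O(p_n)`.  So the form is `O_p(p_n)`, while `p_n = o(C_n)`. -/

section StochasticOrder

variable {Ω : ℕ → Type*} [∀ n, MeasurableSpace (Ω n)] {P : (n : ℕ) → Measure (Ω n)}
  {A A' : (n : ℕ) → Ω n → ℝ} {B B' : ℕ → ℝ}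

lemma isBigOP_iff_eventually :
    IsBigOP P A B ↔ ∀ γ > 0, ∃ ζ > 0, ∀ᶠ n in atTop, (P n).real {ω | ζ * B n < |A n ω|} < γ := by
  simp only [IsBigOP, eventually_atTop, measureReal_def, gt_iff_lt]

lemma IsBigOP.of_isBigO {a : ℕ → ℝ} (hab : a =O[atTop] B) (hB : ∀ n, 0 ≤ B n) :
    IsBigOP P (fun n _ => a n) B := by
  rw [isBigOP_iff_eventually]
  obtain ⟨c, hc, hab⟩ := hab.exists_pos
  refine fun γ hγ => ⟨c, hc, ?_⟩
  filter_upwards [hab.bound] with n hn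
  rw [Real.norm_eq_abs, Real.norm_of_nonneg (hB n)] at hn
  simpa [hn.not_gt] using hγ

lemma IsBigOP.congr_right (hA : IsBigOP P A B) (hB : B =ᶠ[atTop] B') : IsBigOP P A B' := by
  rw [isBigOP_iff_eventually] at hA ⊢
  intro γ hγ
  obtain ⟨ζ, hζ, hAζ⟩ := hA γ hγ
  refine ⟨ζ, hζ, ?_⟩
  filter_upwards [hAζ, hB] with n hn hBn
  rwa [← hBn]

lemma IsBigOP.mono [∀ n, IsFiniteMeasure (P n)] (hA : IsBigOP P A' B)
    (hle : ∀ᶠ n in atTop, ∀ ω, |A n ω| ≤ |A' n ω|) : IsBigOP P A B := by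
  rw [isBigOP_iff_eventually] at hA ⊢
  intro γ hγ
  obtain ⟨ζ, hζ, hAζ⟩ := hA γ hγ
  refine ⟨ζ, hζ, ?_⟩
  filter_upwards [hAζ, hle] with n hn hle
  exact (measureReal_mono fun ω hω => lt_of_lt_of_le hω (hle ω)).trans_lt hn

lemma IsBigOP.add [∀ n, IsFiniteMeasure (P n)] (hA : IsBigOP P A B) (hA' : IsBigOP P A' B) :
    IsBigOP P (fun n ω => A n ω + A' n ω) B := by
  rw [isBigOP_iff_eventually] at hA hA' ⊢
  intro γ hγ
  obtain ⟨ζ, hζ, hAζ⟩ := hA (γ / 2) (half_pos hγ)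
  obtain ⟨ζ', hζ', hAζ'⟩ := hA' (γ / 2) (half_pos hγ)
  refine ⟨ζ + ζ', add_pos hζ hζ', ?_⟩
  filter_upwards [hAζ, hAζ'] with n hn hn'
  have hsub : {ω | (ζ + ζ') * B n < |A n ω + A' n ω|}
      ⊆ {ω | ζ * B n < |A n ω|} ∪ {ω | ζ' * B n < |A' n ω|} := by
    intro ω hω
    by_contra! h
    simp only [Set.mem_union, Set.mem_ofPred_eq, not_or, not_lt] at h hω
    linarith [abs_add_le (A n ω) (A' n ω)]
  linarith [measureReal_mono (μ := P n) hsub, measureReal_union_le (μ := P n)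
    {ω | ζ * B n < |A n ω|} {ω | ζ' * B n < |A' n ω|}]

lemma IsBigOP.mul [∀ n, IsFiniteMeasure (P n)] (hA : IsBigOP P A B) (hA' : IsBigOP P A' B') :
    IsBigOP P (fun n ω => A n ω * A' n ω) (fun n => B n * B' n) := by
  rw [isBigOP_iff_eventually] at hA hA' ⊢
  intro γ hγ
  obtain ⟨ζ, hζ, hAζ⟩ := hA (γ / 2) (half_pos hγ)
  obtain ⟨ζ', hζ', hAζ'⟩ := hA' (γ / 2) (half_pos hγ)
  refine ⟨ζ * ζ', mul_pos hζ hζ', ?_⟩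
  filter_upwards [hAζ, hAζ'] with n hn hn'
  have hsub : {ω | ζ * ζ' * (B n * B' n) < |A n ω * A' n ω|}
      ⊆ {ω | ζ * B n < |A n ω|} ∪ {ω | ζ' * B' n < |A' n ω|} := by
    intro ω hω
    by_contra! h
    simp only [Set.mem_union, Set.mem_ofPred_eq, not_or, not_lt, abs_mul] at h hω
    have := mul_le_mul h.1 h.2 (abs_nonneg _) ((abs_nonneg _).trans h.1)
    linarith
  linarith [measureReal_mono (μ := P n) hsub, measureReal_union_le (μ := P n)
    {ω | ζ * B n < |A n ω|} {ω | ζ' * B' n < |A' n ω|}]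

lemma IsLittleOP.isBigOP [∀ n, IsFiniteMeasure (P n)] (hA : IsLittleOP P A B) :
    IsBigOP P A B := by
  rw [isBigOP_iff_eventually]
  refine fun γ hγ => ⟨1, one_pos, ?_⟩
  filter_upwards [(hA 1 one_pos).eventually_lt_const hγ] with n hn
  exact lt_of_le_of_lt (measureReal_mono fun ω (hω : 1 * B n < |A n ω|) => hω.le) hn

lemma isBigOP_inv_of_tendsto_measure_lt [∀ n, IsFiniteMeasure (P n)] {κ : ℝ} (hκ : 0 < κ)
    (hA : Tendsto (fun n => (P n).real {ω | A n ω < κ}) atTop (nhds 0)) :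
    IsBigOP P (fun n ω => (A n ω)⁻¹) (fun _ => 1) := by
  rw [isBigOP_iff_eventually]
  refine fun γ hγ => ⟨κ⁻¹, inv_pos.2 hκ, ?_⟩
  filter_upwards [hA.eventually_lt_const hγ] with n hn
  refine (measureReal_mono fun ω hω => ?_).trans_lt hn
  by_contra! hκA
  simp only [Set.mem_ofPred_eq, not_lt, mul_one, abs_inv] at hω hκA
  exact hω.not_ge (inv_anti₀ hκ (hκA.trans (le_abs_self _)))

lemma TendstoInP.tendsto_measure_lt [∀ n, IsFiniteMeasure (P n)] {c κ : ℝ}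
    (hA : TendstoInP P A c) (hκ : κ < c) :
    Tendsto (fun n => (P n).real {ω | A n ω < κ}) atTop (nhds 0) := by
  refine squeeze_zero (fun _ => measureReal_nonneg) (fun n => measureReal_mono fun ω hω => ?_)
    (hA (c - κ) (sub_pos.2 hκ))
  rw [Set.mem_ofPred_eq] at hω ⊢
  linarith [neg_abs_le (A n ω - c)]

lemma isBigOP_of_integral_isBigO [∀ n, IsFiniteMeasure (P n)] (hA0 : ∀ n, 0 ≤ A n)
    (hA : ∀ n, Integrable (A n) (P n))
    (hAB : (fun n => ∫ ω, A n ω ∂P n) =O[atTop] B) (hB : ∀ᶠ n in atTop, 0 < B n) :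
    IsBigOP P A B := by
  rw [isBigOP_iff_eventually]
  obtain ⟨c, hc, hAB⟩ := hAB.exists_pos
  intro γ hγ
  refine ⟨2 * c / γ, by positivity, ?_⟩
  filter_upwards [hAB.bound, hB] with n hn hBn
  have hmean : ∫ ω, A n ω ∂P n ≤ c * B n :=
    (le_abs_self _).trans (by simpa only [Real.norm_eq_abs, abs_of_pos hBn] using hn)
  set t := 2 * c / γ * B n with ht
  have ht0 : 0 < t := by positivity
  have hmarkov : t * (P n).real {ω | t ≤ A n ω} ≤ c * B n :=
    (mul_meas_ge_le_integral_of_nonneg (ae_of_all _ (hA0 n)) (hA n) t).trans hmean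
  calc (P n).real {ω | t < |A n ω|}
      ≤ (P n).real {ω | t ≤ A n ω} :=
        measureReal_mono fun ω (hω : t < |A n ω|) => (abs_of_nonneg (hA0 n ω) ▸ hω).le
    _ ≤ c * B n / t := (le_div_iff₀' ht0).2 hmarkov
    _ = γ / 2 := by rw [ht]; field_simp
    _ < γ := half_lt_self hγ

lemma eventually_pos_of_tendsto_div_atTop {C : ℕ → ℝ} (hB : ∀ n, 0 ≤ B n)
    (hC : Tendsto (fun n => C n / B n) atTop atTop) : ∀ᶠ n in atTop, 0 < B n := by
  filter_upwards [hC.eventually_gt_atTop 0] with n hn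
  refine (hB n).lt_of_ne' fun h => ?_
  simp [h] at hn

lemma IsBigOP.tendsto_measure_le [∀ n, IsProbabilityMeasure (P n)] {C : ℕ → ℝ}
    (hA : IsBigOP P A B) (hB : ∀ n, 0 ≤ B n) (hC : Tendsto (fun n => C n / B n) atTop atTop) :
    Tendsto (fun n => (P n).real {ω | A n ω ≤ C n}) atTop (nhds 1) := by
  rw [isBigOP_iff_eventually] at hA
  refine tendsto_order.2 ⟨fun a ha => ?_, fun a ha => .of_forall fun n =>
    measureReal_le_one.trans_lt ha⟩
  obtain ⟨ζ, -, hAζ⟩ := hA (1 - a) (sub_pos.2 ha)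
  filter_upwards [hAζ, hC.eventually_ge_atTop ζ, eventually_pos_of_tendsto_div_atTop hB hC]
    with n hn hζC hBn
  have hcover : Set.univ ⊆ {ω | A n ω ≤ C n} ∪ {ω | ζ * B n < |A n ω|} := by
    intro ω _
    by_contra! h
    simp only [Set.mem_union, Set.mem_ofPred_eq, not_or, not_lt, not_le] at h
    linarith [(le_div_iff₀ hBn).1 hζC, le_abs_self (A n ω)]
  have huniv := measureReal_mono (μ := P n) hcover
  rw [probReal_univ] at huniv
  linarith [measureReal_union_le (μ := P n) {ω | A n ω ≤ C n} {ω | ζ * B n < |A n ω|}]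

end StochasticOrder

section QuadraticForms

variable {ι : Type*} [Fintype ι]

lemma enorm2_sq (v : ι → ℝ) : enorm2 v ^ 2 = v ⬝ᵥ v := by
  rw [enorm2, Real.sq_sqrt (by positivity)]
  simp only [dotProduct, sq]

lemma dotProduct_self_nonneg (v : ι → ℝ) : 0 ≤ v ⬝ᵥ v :=
  dotProduct_self_star_nonneg v

lemma dotProduct_sub_self_le (u v : ι → ℝ) :
    (u - v) ⬝ᵥ (u - v) ≤ 2 * (u ⬝ᵥ u + v ⬝ᵥ v) := by
  have h := dotProduct_self_nonneg (u + v)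
  simp only [add_dotProduct, dotProduct_add, sub_dotProduct, dotProduct_sub] at h ⊢
  linarith

lemma dotProduct_mul_self_le (u v : ι → ℝ) : (u * v) ⬝ᵥ (u * v) ≤ ‖u‖ ^ 2 * (v ⬝ᵥ v) := by
  rw [dotProduct, dotProduct, Finset.mul_sum]
  refine Finset.sum_le_sum fun i _ => ?_
  have hu : u i ^ 2 ≤ ‖u‖ ^ 2 := sq_le_sq.2 (by simpa using norm_le_pi_norm u i)
  calc (u * v) i * (u * v) i = u i ^ 2 * (v i * v i) := by rw [Pi.mul_apply]; ring
    _ ≤ ‖u‖ ^ 2 * (v i * v i) := mul_le_mul_of_nonneg_right hu (mul_self_nonneg _)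

lemma trace_le_of_quadForm_le {M : Matrix ι ι ℝ} {c : ℝ}
    (hM : ∀ v, v ⬝ᵥ (M *ᵥ v) ≤ c * (v ⬝ᵥ v)) : M.trace ≤ c * Fintype.card ι := by
  classical
  calc M.trace ≤ ∑ _j : ι, c := Finset.sum_le_sum fun j _ => by simpa using hM (Pi.single j 1)
    _ = c * Fintype.card ι := by simp [mul_comm]

/-- `v ⬝ᵥ M v ≥ c ‖v‖²` for all `v`; for symmetric `M` this says `λ_min(M) ≥ c`, the form in which
a lower eigenvalue bound on a Gram matrix is used. -/
def IsCoerciveMatrix (c : ℝ) (M : Matrix ι ι ℝ) : Prop :=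
  ∀ v : ι → ℝ, c * (v ⬝ᵥ v) ≤ v ⬝ᵥ (M *ᵥ v)

namespace IsCoerciveMatrix

variable {c : ℝ} {M : Matrix ι ι ℝ}

lemma add_diagonal [DecidableEq ι] (hM : IsCoerciveMatrix c M) {δ : ι → ℝ} (hδ : ∀ i, 0 ≤ δ i) :
    IsCoerciveMatrix c (M + diagonal δ) := by
  intro v
  have hdiag : 0 ≤ v ⬝ᵥ (diagonal δ *ᵥ v) := by
    refine Finset.sum_nonneg fun i _ => ?_
    rw [mulVec_diagonal, mul_left_comm]
    exact mul_nonneg (hδ i) (mul_self_nonneg _)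
  rw [add_mulVec, dotProduct_add]
  linarith [hM v]

lemma isUnit_det [DecidableEq ι] (hM : IsCoerciveMatrix c M) (hc : 0 < c) : IsUnit M.det := by
  rw [isUnit_iff_ne_zero]
  intro hdet
  obtain ⟨v, hv, hMv⟩ := exists_mulVec_eq_zero_iff.2 hdet
  have hle := hM v
  rw [hMv, dotProduct_zero] at hle
  exact hv (dotProduct_self_eq_zero.1
    ((nonpos_of_mul_nonpos_right hle hc).antisymm (dotProduct_self_nonneg v)))

lemma quadForm_nonneg (hM : IsCoerciveMatrix c M) (hc : 0 ≤ c) (v : ι → ℝ) :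
    0 ≤ v ⬝ᵥ (M *ᵥ v) :=
  (mul_nonneg hc (dotProduct_self_nonneg v)).trans (hM v)

lemma mul_quadForm_le (hM : IsCoerciveMatrix c M) (hc : 0 ≤ c) (v : ι → ℝ) :
    c * (v ⬝ᵥ (M *ᵥ v)) ≤ (M *ᵥ v) ⬝ᵥ (M *ᵥ v) := by
  have hsq := dotProduct_self_nonneg (M *ᵥ v - c • v)
  simp only [sub_dotProduct, dotProduct_sub, smul_dotProduct, dotProduct_smul, smul_eq_mul,
    dotProduct_comm (M *ᵥ v) v] at hsq
  linarith [mul_le_mul_of_nonneg_left (hM v) hc]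

end IsCoerciveMatrix

end QuadraticForms

section Ridge

variable {m ι : Type*} [Fintype m] [Fintype ι] [DecidableEq ι]

/-- The penalized Gram matrix `XᵀX + Δ`, where `Δ` is the diagonal matrix with diagonal `δ`. -/
def ridgeGram (X : Matrix m ι ℝ) (δ : ι → ℝ) : Matrix ι ι ℝ := Xᵀ * X + diagonal δ

/-- The generic posterior mean `β̂ = (XᵀX + Δ)⁻¹ Xᵀy`. -/
noncomputable def ridgeEstimator (X : Matrix m ι ℝ) (δ : ι → ℝ) (y : m → ℝ) : ι → ℝ :=
  (ridgeGram X δ)⁻¹ *ᵥ (Xᵀ *ᵥ y)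

/-- The generic posterior covariance `Σ = s (XᵀX + Δ)⁻¹`. -/
noncomputable def ridgeCov (X : Matrix m ι ℝ) (δ : ι → ℝ) (s : ℝ) : Matrix ι ι ℝ :=
  s • (ridgeGram X δ)⁻¹

/-- The squared Mahalanobis length `dᵀ Σ⁻¹ d`, whose sublevel sets are the credible ellipsoids. -/
noncomputable def mahalanobisSq (S : Matrix ι ι ℝ) (d : ι → ℝ) : ℝ := d ⬝ᵥ (S⁻¹ *ᵥ d)

variable {X : Matrix m ι ℝ} {δ : ι → ℝ}

lemma ridgeGram_mulVec_ridgeEstimator_sub (hdet : IsUnit (ridgeGram X δ).det) (b : ι → ℝ)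
    (e : m → ℝ) :
    ridgeGram X δ *ᵥ (ridgeEstimator X δ (X *ᵥ b + e) - b) = Xᵀ *ᵥ e - δ * b := by
  have hdiag : diagonal δ *ᵥ b = δ * b := funext fun i => mulVec_diagonal δ b i
  rw [mulVec_sub, ridgeEstimator, mulVec_mulVec, mul_nonsing_inv _ hdet, one_mulVec, ridgeGram,
    add_mulVec, mulVec_add, mulVec_mulVec, hdiag]
  abel

lemma mahalanobisSq_ridgeCov (hdet : IsUnit (ridgeGram X δ).det) (s : ℝ) (d : ι → ℝ) :
    mahalanobisSq (ridgeCov X δ s) d = s⁻¹ * (d ⬝ᵥ (ridgeGram X δ *ᵥ d)) := by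
  have hinv : (ridgeCov X δ s)⁻¹ = s⁻¹ • ridgeGram X δ := by
    -- At `s = 0` both sides are `0`, because `0⁻¹ = 0` for matrices as well as for reals.
    rcases eq_or_ne s 0 with rfl | hs
    · simp [ridgeCov]
    · refine inv_eq_left_inv ?_
      rw [ridgeCov, smul_mul, Matrix.mul_smul, mul_nonsing_inv _ hdet, inv_smul_smul₀ hs]
  rw [mahalanobisSq, hinv, smul_mulVec, dotProduct_smul, smul_eq_mul]

lemma abs_mahalanobisSq_ridgeEstimator_sub_le {c : ℝ} (hX : IsCoerciveMatrix c (Xᵀ * X))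
    (hc : 0 < c) (hδ : ∀ i, 0 ≤ δ i) (s : ℝ) (b : ι → ℝ) (e : m → ℝ) :
    |mahalanobisSq (ridgeCov X δ s) (ridgeEstimator X δ (X *ᵥ b + e) - b)|
      ≤ |s⁻¹ * (2 / c * ((Xᵀ *ᵥ e) ⬝ᵥ (Xᵀ *ᵥ e) + ‖δ‖ ^ 2 * (b ⬝ᵥ b)))| := by
  have hgram : IsCoerciveMatrix c (ridgeGram X δ) := hX.add_diagonal hδ
  have hdet := hgram.isUnit_det hc
  set d := ridgeEstimator X δ (X *ᵥ b + e) - b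
  have hform : c * (d ⬝ᵥ (ridgeGram X δ *ᵥ d))
      ≤ 2 * ((Xᵀ *ᵥ e) ⬝ᵥ (Xᵀ *ᵥ e) + ‖δ‖ ^ 2 * (b ⬝ᵥ b)) :=
    calc c * (d ⬝ᵥ (ridgeGram X δ *ᵥ d))
        ≤ (ridgeGram X δ *ᵥ d) ⬝ᵥ (ridgeGram X δ *ᵥ d) := hgram.mul_quadForm_le hc.le d
      _ = (Xᵀ *ᵥ e - δ * b) ⬝ᵥ (Xᵀ *ᵥ e - δ * b) := by
          rw [ridgeGram_mulVec_ridgeEstimator_sub hdet]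
      _ ≤ 2 * ((Xᵀ *ᵥ e) ⬝ᵥ (Xᵀ *ᵥ e) + (δ * b) ⬝ᵥ (δ * b)) := dotProduct_sub_self_le _ _
      _ ≤ _ := by gcongr; exact dotProduct_mul_self_le δ b
  rw [mahalanobisSq_ridgeCov hdet, abs_mul, abs_mul]
  refine mul_le_mul_of_nonneg_left (abs_le_abs_of_nonneg (hgram.quadForm_nonneg hc.le d) ?_)
    (abs_nonneg _)
  rwa [div_mul_eq_mul_div, le_div_iff₀' hc]

end Ridge

section GaussianNoise

lemma memLp_two_and_integral_sq_of_map_eq_gaussianReal {Ω : Type*} [MeasurableSpace Ω]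
    {P : Measure Ω} {Z : Ω → ℝ} {v : NNReal} (hZ : P.map Z = gaussianReal 0 v) :
    MemLp Z 2 P ∧ ∫ ω, Z ω ^ 2 ∂P = v := by
  have hlaw : HasLaw Z (gaussianReal 0 v) P :=
    ⟨aemeasurable_of_map_neZero (by rw [hZ]; infer_instance), hZ⟩
  have hmean : ∫ ω, Z ω ∂P = 0 := by rw [hlaw.integral_eq, integral_id_gaussianReal]
  constructor
  · have hid : MemLp id 2 (P.map Z) := hZ ▸ memLp_id_gaussianReal 2
    exact hid.comp_of_map hlaw.aemeasurable
  · rw [← variance_of_integral_eq_zero hlaw.aemeasurable hmean, hlaw.variance_eq,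
      variance_id_gaussianReal]

lemma dotProduct_centering_mulVec {n : ℕ} {a : Fin n → ℝ} (ha : ∑ i, a i = 0) (σ2 : ℝ) :
    a ⬝ᵥ ((σ2 • ((1 : Matrix (Fin n) (Fin n) ℝ) - (n : ℝ)⁻¹ • of fun _ _ => (1 : ℝ))) *ᵥ a)
      = σ2 * (a ⬝ᵥ a) := by
  have hones : (of fun _ _ : Fin n => (1 : ℝ)) *ᵥ a = 0 := by
    ext i
    simp [mulVec, dotProduct, ha]
  rw [smul_mulVec, sub_mulVec, smul_mulVec, hones, one_mulVec, smul_zero, sub_zero,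
    dotProduct_smul, smul_eq_mul]

lemma integrable_and_integral_score_sq {Ω : Type*} [MeasurableSpace Ω] {P : Measure Ω} {n : ℕ}
    {ι : Type*} [Fintype ι] {X : Matrix (Fin n) ι ℝ} (hX : ∀ j, ∑ i, X i j = 0) {σ2 : ℝ}
    (hσ2 : 0 ≤ σ2) {ε : Ω → Fin n → ℝ} (hε : IsMvGaussian P ε 0
      (σ2 • ((1 : Matrix (Fin n) (Fin n) ℝ) - (n : ℝ)⁻¹ • of fun _ _ => (1 : ℝ)))) :
    Integrable (fun ω => (Xᵀ *ᵥ ε ω) ⬝ᵥ (Xᵀ *ᵥ ε ω)) P ∧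
      ∫ ω, (Xᵀ *ᵥ ε ω) ⬝ᵥ (Xᵀ *ᵥ ε ω) ∂P = σ2 * (Xᵀ * X).trace := by
  have hcoord (j : ι) : MemLp (fun ω => (Xᵀ *ᵥ ε ω) j) 2 P ∧
      ∫ ω, (Xᵀ *ᵥ ε ω) j ^ 2 ∂P = σ2 * (Xᵀ j ⬝ᵥ Xᵀ j) := by
    have hmap := hε (Xᵀ j)
    rw [dotProduct_centering_mulVec (a := Xᵀ j) (hX j)] at hmap
    simp only [Pi.zero_apply, mul_zero, Finset.sum_const_zero] at hmap
    rw [← Real.coe_toNNReal _ (mul_nonneg hσ2 (dotProduct_self_nonneg (Xᵀ j)))]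
    exact memLp_two_and_integral_sq_of_map_eq_gaussianReal hmap
  have hint (j : ι) := (hcoord j).1.integrable_sq
  simp only [dotProduct, ← sq] at hint ⊢
  refine ⟨integrable_finsetSum _ fun j _ => hint j, ?_⟩
  rw [integral_finsetSum _ fun j _ => hint j, trace, Finset.mul_sum]
  exact Finset.sum_congr rfl fun j _ => (hcoord j).2

lemma isBigOP_score_sq {Ω : ℕ → Type*} [∀ n, MeasurableSpace (Ω n)]
    {P : (n : ℕ) → Measure (Ω n)} [∀ n, IsFiniteMeasure (P n)] {ι : ℕ → Type*} [∀ n, Fintype (ι n)]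
    {X : (n : ℕ) → Matrix (Fin n) (ι n) ℝ} (hXc : ∀ n j, ∑ i, X n i j = 0) {dmax : ℝ}
    (hX : ∀ᶠ n in atTop, ∀ v, v ⬝ᵥ (((X n)ᵀ * X n) *ᵥ v) ≤ n * dmax * (v ⬝ᵥ v))
    (hι : ∀ᶠ n in atTop, 0 < (Fintype.card (ι n) : ℝ)) {σ2 : ℝ} (hσ2 : 0 ≤ σ2)
    {ε : (n : ℕ) → Ω n → Fin n → ℝ} (hε : ∀ n, IsMvGaussian (P n) (ε n) 0
      (σ2 • ((1 : Matrix (Fin n) (Fin n) ℝ) - (n : ℝ)⁻¹ • of fun _ _ => (1 : ℝ)))) :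
    IsBigOP P (fun n ω => ((X n)ᵀ *ᵥ ε n ω) ⬝ᵥ ((X n)ᵀ *ᵥ ε n ω))
      (fun n => n * Fintype.card (ι n)) := by
  have hscore n := integrable_and_integral_score_sq (hXc n) hσ2 (hε n)
  refine isBigOP_of_integral_isBigO (fun n ω => dotProduct_self_nonneg _)
    (fun n => (hscore n).1) (.of_bound (σ2 * dmax) ?_) ?_
  · filter_upwards [hX] with n hXn
    have htrace := mul_le_mul_of_nonneg_left (trace_le_of_quadForm_le hXn) hσ2
    rw [Real.norm_of_nonneg (integral_nonneg fun ω => dotProduct_self_nonneg _), (hscore n).2,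
      Real.norm_of_nonneg (by positivity)]
    linarith
  · filter_upwards [hι, eventually_gt_atTop 0] with n hιn hn
    positivity

end GaussianNoise

section Groups

lemma dotProduct_self_le_of_group_norm_le {γ : Type*} [Fintype γ] {κ : γ → Type*}
    [∀ g, Fintype (κ g)] {b : (Σ g, κ g) → ℝ} {U : ℝ} (hb : ∀ g, enorm2 (fun j => b ⟨g, j⟩) ≤ U) :
    b ⬝ᵥ b ≤ U ^ 2 * Fintype.card (Σ g, κ g) := by
  rw [dotProduct, Fintype.sum_sigma, Fintype.card_sigma, Nat.cast_sum, Finset.mul_sum]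
  refine Finset.sum_le_sum fun g _ => ?_
  rcases isEmpty_or_nonempty (κ g) with _ | _
  · simp
  calc ∑ j, b ⟨g, j⟩ * b ⟨g, j⟩ = enorm2 (fun j => b ⟨g, j⟩) ^ 2 := (enorm2_sq _).symm
    _ ≤ U ^ 2 := pow_le_pow_left₀ (Real.sqrt_nonneg _) (hb g) 2
    _ ≤ U ^ 2 * Fintype.card (κ g) :=
      le_mul_of_one_le_right (sq_nonneg U) (mod_cast Fintype.card_pos)

lemma norm_sigma_fst_le_abs_sSup_range {γ : Type*} [Fintype γ] {κ : γ → Type*}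
    [∀ g, Fintype (κ g)] {δ : γ → ℝ} (hδ : ∀ g, 0 ≤ δ g) :
    ‖fun i : Σ g, κ g => δ i.1‖ ≤ |sSup (Set.range δ)| := by
  refine (pi_norm_le_iff_of_nonneg (abs_nonneg _)).2 fun i => ?_
  rw [Real.norm_of_nonneg (hδ i.1)]
  exact (le_csSup (Set.finite_range δ).bddAbove ⟨i.1, rfl⟩).trans (le_abs_self _)

variable {γ : ℕ → Type*} [∀ n, Fintype (γ n)] {κ : (n : ℕ) → γ n → Type*}
  [∀ n g, Fintype (κ n g)]

lemma isBigO_dotProduct_self_of_group_norm_le {b : (n : ℕ) → (Σ g, κ n g) → ℝ} {U : ℝ}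
    (hb : ∀ᶠ n in atTop, ∀ g, enorm2 (fun j => b n ⟨g, j⟩) ≤ U) :
    (fun n => b n ⬝ᵥ b n) =O[atTop] fun n => (Fintype.card (Σ g, κ n g) : ℝ) := by
  refine .of_bound (U ^ 2) ?_
  filter_upwards [hb] with n hn
  rw [Real.norm_of_nonneg (dotProduct_self_nonneg _), Real.norm_natCast]
  exact dotProduct_self_le_of_group_norm_le hn

lemma isBigOP_norm_sigma_fst {Ω : ℕ → Type*} [∀ n, MeasurableSpace (Ω n)]
    {P : (n : ℕ) → Measure (Ω n)} [∀ n, IsFiniteMeasure (P n)] {δ : (n : ℕ) → Ω n → γ n → ℝ}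
    {B : ℕ → ℝ} (hδ0 : ∀ n ω g, 0 ≤ δ n ω g)
    (hδ : IsBigOP P (fun n ω => sSup (Set.range (δ n ω))) B) :
    IsBigOP P (fun n ω => ‖fun i : Σ g, κ n g => δ n ω i.1‖) B :=
  hδ.mono (.of_forall fun n ω => by
    simpa only [abs_norm] using norm_sigma_fst_le_abs_sSup_range (hδ0 n ω))

end Groups

theorem stmt_3_general {Ω : ℕ → Type*} [∀ n, MeasurableSpace (Ω n)]
    {P : (n : ℕ) → Measure (Ω n)} [∀ n, IsProbabilityMeasure (P n)]
    {ι : ℕ → Type*} [∀ n, Fintype (ι n)] [∀ n, DecidableEq (ι n)]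
    {X : (n : ℕ) → Matrix (Fin n) (ι n) ℝ} {dmin : ℝ} (hdmin : 0 < dmin)
    (hX : ∀ᶠ n : ℕ in atTop, IsCoerciveMatrix (n * dmin) ((X n)ᵀ * X n))
    {β0 : (n : ℕ) → ι n → ℝ}
    (hβ0 : (fun n => β0 n ⬝ᵥ β0 n) =O[atTop] fun n => (Fintype.card (ι n) : ℝ))
    {ε : (n : ℕ) → Ω n → Fin n → ℝ}
    (hε : IsBigOP P (fun n ω => ((X n)ᵀ *ᵥ ε n ω) ⬝ᵥ ((X n)ᵀ *ᵥ ε n ω))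
      (fun n => (n : ℝ) * Fintype.card (ι n)))
    {δ : (n : ℕ) → Ω n → ι n → ℝ} (hδ0 : ∀ n ω i, 0 ≤ δ n ω i)
    (hδ : IsBigOP P (fun n ω => ‖δ n ω‖) (fun n => √n))
    {s : (n : ℕ) → Ω n → ℝ} {κ : ℝ} (hκ : 0 < κ)
    (hs : Tendsto (fun n => (P n).real {ω | s n ω < κ}) atTop (nhds 0))
    {C : ℕ → ℝ} (hC : Tendsto (fun n => C n / Fintype.card (ι n)) atTop atTop) :
    Tendsto (fun n => (P n).real {ω | mahalanobisSq (ridgeCov (X n) (δ n ω) (s n ω))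
      (ridgeEstimator (X n) (δ n ω) (X n *ᵥ β0 n + ε n ω) - β0 n) ≤ C n}) atTop (nhds 1) := by
  have hbias : IsBigOP P (fun n ω => ‖δ n ω‖ ^ 2 * (β0 n ⬝ᵥ β0 n))
      (fun n => n * Fintype.card (ι n)) := by
    simpa only [← sq, Real.sq_sqrt (Nat.cast_nonneg _)] using
      (hδ.mul hδ).mul (.of_isBigO hβ0 fun n => Nat.cast_nonneg _)
  have hcurv : IsBigOP P (fun n _ => 2 / (n * dmin)) (fun n => (n : ℝ)⁻¹) := by
    refine .of_isBigO (.of_bound (2 / dmin) (.of_forall fun n => le_of_eq ?_))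
      fun n => by positivity
    rw [Real.norm_of_nonneg (by positivity), Real.norm_of_nonneg (by positivity)]
    ring
  have hform := (isBigOP_inv_of_tendsto_measure_lt hκ hs).mul (hcurv.mul (hε.add hbias))
  refine ((hform.mono ?_).congr_right ?_).tendsto_measure_le (fun n => Nat.cast_nonneg _) hC
  · filter_upwards [hX, eventually_gt_atTop 0] with n hXn hn ω
    exact abs_mahalanobisSq_ridgeEstimator_sub_le hXn (by positivity) (hδ0 n ω) _ _ _
  · filter_upwards [eventually_gt_atTop 0] with n hn
    field_simp

open MeasureTheory ProbabilityTheory Matrix Filter Asymptotics in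
/-- Supplementary Lemma 1: under (B1)–(B4) and `C_n/p_n → ∞`, the generic elliptical
credible region contains the true parameter with probability approaching one. -/
theorem stmt_3
    -- probability spaces
    (Ω : ℕ → Type) [∀ n, MeasurableSpace (Ω n)]
    (P : (n : ℕ) → Measure (Ω n)) [∀ n, IsProbabilityMeasure (P n)]
    -- grouped design: group `g` has size `pg n g`; coordinates are indexed by the sigma type
    (G : ℕ → ℕ) (pg : (n : ℕ) → Fin (G n) → ℕ)
    (X : (n : ℕ) → Matrix (Fin n) ((g : Fin (G n)) × Fin (pg n g)) ℝ)
    (hXc : ∀ n j, ∑ i, X n i j = 0)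
    -- true model
    (β0 : (n : ℕ) → ((g : Fin (G n)) × Fin (pg n g)) → ℝ)
    (σ2 : ℝ) (hσ2 : 0 < σ2)
    (ε : (n : ℕ) → Ω n → Fin n → ℝ)
    (hε : ∀ n, IsMvGaussian (P n) (ε n) 0
      (σ2 • ((1 : Matrix (Fin n) (Fin n) ℝ) - ((n : ℝ))⁻¹ • Matrix.of fun _ _ => (1 : ℝ))))
    (y : (n : ℕ) → Ω n → Fin n → ℝ) (hy : ∀ n ω, y n ω = X n *ᵥ β0 n + ε n ω)
    -- (B1)
    (hB1a : (fun n => (∑ g, pg n g : ℝ)) =o[atTop] fun n => (n : ℝ))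
    (hB1b : ∃ Pmax : ℝ, ∃ N : ℕ, ∀ n, N ≤ n → ∀ g, (pg n g : ℝ) ≤ Pmax)
    -- (B2): the number of truly important predictors is `o` of the total number
    (hB2 : (fun n => ∑ g ∈ Finset.univ.filter (fun g => ∃ j, β0 n ⟨g, j⟩ ≠ 0), (pg n g : ℝ))
      =o[atTop] fun n => (∑ g, pg n g : ℝ))
    -- (B3)
    (dmin dmax : ℝ) (hdmin : 0 < dmin)
    (hB3 : ∃ N : ℕ, ∀ n, N ≤ n → ∀ v : ((g : Fin (G n)) × Fin (pg n g)) → ℝ,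
      (n : ℝ) * dmin * enorm2 v ^ 2 ≤ v ⬝ᵥ (((X n)ᵀ * X n) *ᵥ v) ∧
      v ⬝ᵥ (((X n)ᵀ * X n) *ᵥ v) ≤ (n : ℝ) * dmax * enorm2 v ^ 2)
    -- (B4)
    (hB4 : ∃ U : ℝ, ∃ N : ℕ, ∀ n, N ≤ n → ∀ g, enorm2 (fun j => β0 n ⟨g, j⟩) ≤ U)
    -- generic posterior quantities
    (δ : (n : ℕ) → Ω n → Fin (G n) → ℝ) (hδ0 : ∀ n ω g, 0 ≤ δ n ω g)
    (hδo : IsLittleOP P (fun n ω => sSup (Set.range (δ n ω))) fun n => Real.sqrt n)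
    (Δ : (n : ℕ) → Ω n → Matrix ((g : Fin (G n)) × Fin (pg n g)) ((g : Fin (G n)) × Fin (pg n g)) ℝ)
    (hΔ : ∀ n ω, Δ n ω = Matrix.diagonal fun i => δ n ω i.1)
    (βhat : (n : ℕ) → Ω n → ((g : Fin (G n)) × Fin (pg n g)) → ℝ)
    (hβhat : ∀ n ω, βhat n ω = ((X n)ᵀ * X n + Δ n ω)⁻¹ *ᵥ ((X n)ᵀ *ᵥ y n ω))
    (s' : (n : ℕ) → Ω n → ℝ) (hs' : TendstoInP P s' σ2)
    (Sg : (n : ℕ) → Ω n → Matrix ((g : Fin (G n)) × Fin (pg n g)) ((g : Fin (G n)) × Fin (pg n g)) ℝ)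
    (hSg : ∀ n ω, Sg n ω = s' n ω • ((X n)ᵀ * X n + Δ n ω)⁻¹)
    -- the radius
    (C : ℕ → ℝ) (hC : Tendsto (fun n => C n / (∑ g, pg n g : ℝ)) atTop atTop) :
    Tendsto (fun n => ((P n) {ω |
        (fun i => βhat n ω i - β0 n i) ⬝ᵥ ((Sg n ω)⁻¹ *ᵥ fun i => βhat n ω i - β0 n i)
          ≤ C n}).toReal)
      atTop (nhds 1) := by
  obtain ⟨N, hN⟩ := hB3
  obtain ⟨U, N', hU⟩ := hB4
  simp only [enorm2_sq] at hN
  have hC' : Tendsto (fun n => C n / Fintype.card ((g : Fin (G n)) × Fin (pg n g)))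
      atTop atTop := by simpa using hC
  have hscore := isBigOP_score_sq hXc (eventually_atTop.2 ⟨N, fun n hn v => (hN n hn v).2⟩)
    (eventually_pos_of_tendsto_div_atTop (fun n => Nat.cast_nonneg _) hC') hσ2.le hε
  simp only [hβhat, hSg, hΔ, hy]
  exact stmt_3_general hdmin (eventually_atTop.2 ⟨N, fun n hn v => (hN n hn v).1⟩)
    (isBigO_dotProduct_self_of_group_norm_le (eventually_atTop.2 ⟨N', hU⟩)) hscore
    (fun n ω i => hδ0 n ω i.1) (isBigOP_norm_sigma_fst hδ0 hδo.isBigOP)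
    (half_pos hσ2) (hs'.tendsto_measure_lt (half_lt_self hσ2)) hC'
end

section
/- (Boundary identity for the constrained minimizer, used in the proof of Supplementary Lemma 3.) Let Σ ∈ ℝ^{p×p} be symmetric positive definite, β̂ ∈ ℝ^p, C > 0, let the coordinates of ℝ^p be partitioned into groups of sizes p_g with positive weights û_g > 0, and let K(β) = Σ_{g=1}^G √p_g ‖β_g‖₂ / û_g². Then every minimizer β̃ of K over the ellipsoid S = {β : (β − β̂)^⊤ Σ^{-1} (β − β̂) ≤ C} satisfies (β̃ − β̂)^⊤ Σ^{-1} (β̃ − β̂) = min{C, β̂^⊤ Σ^{-1} β̂}. -/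
open MeasureTheory ProbabilityTheory Matrix Filter Asymptotics

/-!
A point `x` with `K x > 0` is never a local minimizer of a positively homogeneous `K`, because `K`
decreases strictly along the segment from `x` to `0`. Hence a nonzero minimizer of `K` over
`{Q ≤ C}` lies on `{Q = C}`, and `0`, having a smaller value of `K`, is infeasible: `C < Q 0`.
If instead the minimizer is `0`, then `Q 0 ≤ C`. In both cases the value of `Q` is `min C (Q 0)`.
-/

section PositivelyHomogeneous

open Topology

variable {E : Type*} [AddCommMonoid E] [Module ℝ E] [TopologicalSpace E] [ContinuousSMul ℝ E]
  {K Q : E → ℝ} {C : ℝ} {x : E}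

lemma not_isLocalMin_of_posHomogeneous (hsmul : ∀ t : ℝ, 0 ≤ t → K (t • x) = t * K x)
    (hx : 0 < K x) : ¬ IsLocalMin K x := by
  intro hmin
  have hray : Tendsto (fun t : ℝ => t • x) (𝓝[<] 1) (𝓝 x) := by
    have hcont : Continuous fun t : ℝ => t • x := by fun_prop
    simpa only [one_smul] using (hcont.tendsto 1).mono_left nhdsWithin_le_nhds
  obtain ⟨t, hle, ht0, ht1⟩ :=
    ((hray.eventually hmin).and (Ioo_mem_nhdsLT (zero_lt_one' ℝ))).exists
  rw [hsmul t ht0.le] at hle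
  exact hle.not_gt (mul_lt_of_lt_one_left hx ht1)

theorem stmt_15_general (hsmul : ∀ y, ∀ t : ℝ, 0 ≤ t → K (t • y) = t * K y)
    (hpos : ∀ y, y ≠ 0 → 0 < K y) (hQ : UpperSemicontinuousAt Q x) (hx : Q x ≤ C)
    (hmin : IsMinOn K {y | Q y ≤ C} x) : Q x = min C (Q 0) := by
  rcases eq_or_ne x 0 with rfl | hx0
  · exact (min_eq_right hx).symm
  have hKx : 0 < K x := hpos x hx0
  have hK0 : K 0 = 0 := by simpa using hsmul 0 0 le_rfl
  have h_infeasible : C < Q 0 := by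
    by_contra! h
    exact (hmin h).not_gt (hK0.trans_lt hKx)
  have h_boundary : C ≤ Q x := by
    by_contra! h
    have h_nhds : {y | Q y ≤ C} ∈ 𝓝 x := (hQ C h).mono fun _ => le_of_lt
    exact not_isLocalMin_of_posHomogeneous (hsmul x) hKx (hmin.isLocalMin h_nhds)
  rw [min_eq_left h_infeasible.le]
  exact hx.antisymm h_boundary

end PositivelyHomogeneous

lemma enorm2_eq_norm_toLp {ι : Type*} [Fintype ι] (v : ι → ℝ) :
    enorm2 v = ‖WithLp.toLp 2 v‖ := by
  simp only [enorm2, EuclideanSpace.norm_eq, Real.norm_eq_abs, sq_abs]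

section GroupPenalty

variable {Γ : Type*} [Fintype Γ] {ι : Γ → Type*} [∀ g, Fintype (ι g)]

/-- The group-lasso penalty `∑ g, w g * ‖β_g‖₂`, where `β_g` is the block of coordinates of `β`
with first component `g`. The penalty `K` of the theorem has the weights `w g = √p_g / û_g²`. -/
noncomputable def groupPenalty (w : Γ → ℝ) (β : ((g : Γ) × ι g) → ℝ) : ℝ :=
  ∑ g, w g * enorm2 fun j => β ⟨g, j⟩

lemma groupPenalty_smul (w : Γ → ℝ) (β : ((g : Γ) × ι g) → ℝ) {t : ℝ} (ht : 0 ≤ t) :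
    groupPenalty w (t • β) = t * groupPenalty w β := by
  have hblock (g : Γ) : enorm2 (fun j => (t • β) ⟨g, j⟩) = t * enorm2 (fun j => β ⟨g, j⟩) := by
    rw [enorm2_eq_norm_toLp, enorm2_eq_norm_toLp, ← norm_smul_of_nonneg ht, ← WithLp.toLp_smul]
    rfl
  simp only [groupPenalty, hblock, Finset.mul_sum, mul_left_comm]

lemma groupPenalty_pos {w : Γ → ℝ} (hw : ∀ i : (g : Γ) × ι g, 0 < w i.1)
    {β : ((g : Γ) × ι g) → ℝ} (hβ : β ≠ 0) : 0 < groupPenalty w β := by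
  have hterm_nonneg (g : Γ) : 0 ≤ w g * enorm2 fun j => β ⟨g, j⟩ := by
    rcases isEmpty_or_nonempty (ι g) with _ | ⟨⟨j⟩⟩
    · simp [enorm2]
    · exact mul_nonneg (hw ⟨g, j⟩).le (Real.sqrt_nonneg _)
  obtain ⟨⟨g, j⟩, hgj⟩ := Function.ne_iff.mp hβ
  refine Finset.sum_pos' (fun g _ => hterm_nonneg g)
    ⟨g, Finset.mem_univ g, mul_pos (hw ⟨g, j⟩) ?_⟩
  rw [enorm2_eq_norm_toLp, norm_pos_iff]
  exact fun h => hgj (congrFun ((WithLp.toLp_eq_zero 2).mp h) j)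

end GroupPenalty

open Matrix in
/-- Boundary identity for the constrained minimizer (proof of Supplementary Lemma 3):
any minimizer of `K` over the ellipsoid `S` satisfies
`(β̃ − β̂)ᵀΣ⁻¹(β̃ − β̂) = min{C, β̂ᵀΣ⁻¹β̂}`. -/
theorem stmt_15
    (G : ℕ) (pg : Fin G → ℕ)
    (Sg : Matrix ((g : Fin G) × Fin (pg g)) ((g : Fin G) × Fin (pg g)) ℝ)
    (hSg : Sg.PosDef)
    (βhat : ((g : Fin G) × Fin (pg g)) → ℝ)
    (C : ℝ) (hC : 0 < C)
    (uh : Fin G → ℝ) (huh : ∀ g, 0 < uh g) :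
    ∀ βtil : ((g : Fin G) × Fin (pg g)) → ℝ,
      -- `β̃ ∈ S` ...
      ((fun i => βtil i - βhat i) ⬝ᵥ (Sg⁻¹ *ᵥ fun i => βtil i - βhat i) ≤ C ∧
        -- ... and `β̃` minimizes `K` over `S`
        (∀ β : ((g : Fin G) × Fin (pg g)) → ℝ,
          (fun i => β i - βhat i) ⬝ᵥ (Sg⁻¹ *ᵥ fun i => β i - βhat i) ≤ C →
          (∑ g, Real.sqrt (pg g) * enorm2 (fun j => βtil ⟨g, j⟩) / uh g ^ 2)
            ≤ ∑ g, Real.sqrt (pg g) * enorm2 (fun j => β ⟨g, j⟩) / uh g ^ 2)) →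
      (fun i => βtil i - βhat i) ⬝ᵥ (Sg⁻¹ *ᵥ fun i => βtil i - βhat i)
        = min C (βhat ⬝ᵥ (Sg⁻¹ *ᵥ βhat)) := by
  rintro βtil ⟨hfeas, hmin⟩
  have hw (i : (g : Fin G) × Fin (pg g)) : 0 < √(pg i.1) / uh i.1 ^ 2 :=
    div_pos (Real.sqrt_pos.mpr (Nat.cast_pos.mpr i.2.pos)) (pow_pos (huh i.1) 2)
  have hQ : Continuous fun β => (β - βhat) ⬝ᵥ (Sg⁻¹ *ᵥ (β - βhat)) := by fun_prop
  have hQ0 : (0 - βhat) ⬝ᵥ (Sg⁻¹ *ᵥ (0 - βhat)) = βhat ⬝ᵥ (Sg⁻¹ *ᵥ βhat) := by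
    rw [zero_sub, mulVec_neg, neg_dotProduct_neg]
  simp only [mul_div_right_comm] at hmin
  rw [← hQ0]
  exact stmt_15_general (fun β _ => groupPenalty_smul (fun g => √(pg g) / uh g ^ 2) β)
    (fun _ => groupPenalty_pos hw) (hQ.upperSemicontinuous βtil) hfeas hmin
end
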